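/- arXiv:0708.0400 — 2 statements merged into one kernel-verified Lean document; each statement's English description precedes it below -/
import Mathlib

section
/- Suppose the line bundle connection F is flat (R_{AB} = 0), the antibracket satisfies the graded Jacobi identity, and the Grassmann-odd function ν satisfies the first-order condition Δ_F² = (ν, ·). Then the zeroth-order nilpotency condition (Δ_F ν) = 0 follows automatically; it is not an independent condition. -/
/-! The only input from `Δ² = (ν, ·)` is that `Δ²` is an even derivation whose components are
`Δ² x^b = (ν, x^b)`. Write `∇_a = ∂_a + F_a` and `B_a = (x^a, ·) = E^{ab} ∂_b`, so that
`Δ = ½ (-1)^a ∇_a B_a`, and put `v^b = Δ x^b`. Flatness says that the `∇_a` supercommute.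

* By skewsymmetry of `E`, `(ν, x^b) = -B_b ν`, so the divergence `Z = (-1)^b ∇_b Δ v^b` of the
  vector field `Δ²` is `-2 Δν` (`lap_vv`); it remains to show `Z = 0`.
* `Δ` generates the bracket: `Δ(x^a g) = v^a g + (-1)^a B_a g + (-1)^a x^a Δg`
  (`lap_coord_mul`). Evaluating the derivation `Δ²` on `x^a x^b` then gives
  `B_a v^b + (-1)^{ab} B_b v^a = -(-1)^a Δ E^{ab}` (`lap_E`).
* `2 Z = (-1)^{a+b} ∇_b ∇_a B_a v^b`. Symmetrizing in `a, b` turns this into a multiple of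
  `(-1)^b ∇_b ∇_a Δ E^{ab} = ½ (-1)^{b+c} ∇_b ∇_a ∇_c (x^c, (x^a, x^b))`, whose cyclic
  symmetrization vanishes by the Jacobi identity on coordinates (`triple_zero`).

Equivalently: `Δ` is formally self-adjoint and odd, so its square is anti-self-adjoint, and an
anti-self-adjoint vector field is divergence-free. -/


open scoped BigOperators

noncomputable section

/-- The sign `(-1)^p` for a parity `p : ZMod 2`, valued in `ℚ`. -/
def sgn (p : ZMod 2) : ℚ := if p = 0 then 1 else -1

/-- A supercommutative algebra of "functions on a superdomain" with local coordinates
`coord i`, Grassmann parities `ε i`, and left partial derivatives `D i`. -/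
structure SuperAlg (ι : Type) [Fintype ι] [DecidableEq ι]
    (A : Type) [Ring A] [Algebra ℚ A] where
  ε : ι → ZMod 2
  hom : ZMod 2 → Submodule ℚ A
  one_mem : (1 : A) ∈ hom 0
  mul_mem : ∀ {p q : ZMod 2} {a b : A}, a ∈ hom p → b ∈ hom q → a * b ∈ hom (p + q)
  supercomm : ∀ {p q : ZMod 2} {a b : A}, a ∈ hom p → b ∈ hom q →
    a * b = sgn (p * q) • (b * a)
  D : ι → A →ₗ[ℚ] A
  D_mem : ∀ (i : ι) {p : ZMod 2} {a : A}, a ∈ hom p → D i a ∈ hom (p + ε i)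
  D_leibniz : ∀ (i : ι) {p : ZMod 2} {a : A} (b : A), a ∈ hom p →
    D i (a * b) = D i a * b + sgn (ε i * p) • (a * D i b)
  D_comm : ∀ (i j : ι) (a : A), D i (D j a) = sgn (ε i * ε j) • D j (D i a)
  coord : ι → A
  coord_mem : ∀ i, coord i ∈ hom (ε i)
  D_coord : ∀ i j, D i (coord j) = if i = j then (1 : A) else 0

namespace SuperAlg

variable {ι : Type} [Fintype ι] [DecidableEq ι]
variable {A : Type} [Ring A] [Algebra ℚ A]

/-- The operator of left multiplication by `f`. -/
def L (f : A) : A →ₗ[ℚ] A := LinearMap.mulLeft ℚ f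

/-- The graded commutator `[T,U] = T∘U - (-1)^{pq} U∘T` of operators of parities `p`, `q`. -/
def gcomm (p q : ZMod 2) (T U : A →ₗ[ℚ] A) : A →ₗ[ℚ] A :=
  T ∘ₗ U - sgn (p * q) • (U ∘ₗ T)

variable (S : SuperAlg ι A)

/-- The bracket `(f,g) = (f ∂⃖_A) M^{AB} (∂_B g)` built from the matrix `M`,
for `f` homogeneous of parity `pf`; the right derivative is expressed through
the left one via `f ∂⃖_A = (-1)^{ε_A (ε_f + 1)} ∂_A f`. -/
def brkt (M : ι → ι → A) (pf : ZMod 2) (f g : A) : A :=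
  ∑ a, ∑ b, sgn (S.ε a * (pf + 1)) • (S.D a f * (M a b * S.D b g))

/-- The first-order operator `(x, ·)` (for Grassmann-odd `x`), built from the matrix `M`. -/
def Hop (M : ι → ι → A) (x : A) : A →ₗ[ℚ] A :=
  ∑ a, ∑ b, L (S.D a x) ∘ₗ L (M a b) ∘ₗ S.D b

/-- The Laplacian `((-1)^{ε_A}/2)(∂_A + F_A) M^{AB} ∂_B`. -/
def lap (F : ι → A) (M : ι → ι → A) : A →ₗ[ℚ] A :=
  (1/2 : ℚ) • ∑ a, ∑ b, sgn (S.ε a) •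
    ((S.D a ∘ₗ L (M a b) ∘ₗ S.D b) + (L (F a) ∘ₗ L (M a b) ∘ₗ S.D b))

/-- The curvature `R_{AB} = (∂_A F_B) - (-1)^{ε_A ε_B}(∂_B F_A)` of a line bundle
connection `F`. -/
def curv (F : ι → A) (a b : ι) : A :=
  S.D a (F b) - sgn (S.ε a * S.ε b) • S.D b (F a)

/-- The raised-index curvature `R^{AD} = E^{AB} R_{BC} E^{CD} (-1)^{ε_C}`. -/
def curvUp (E : ι → ι → A) (F : ι → A) (a d : ι) : A :=
  ∑ b, ∑ c, sgn (S.ε c) • (E a b * (S.curv F b c * E c d))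

/-- The graded Jacobi identity for the antibracket, on homogeneous functions. -/
def JacobiId (E : ι → ι → A) : Prop :=
  ∀ (pf pg ph : ZMod 2) (f g h : A),
    f ∈ S.hom pf → g ∈ S.hom pg → h ∈ S.hom ph →
      sgn ((pf + 1) * (ph + 1)) • S.brkt E pf f (S.brkt E pg g h)
      + sgn ((pg + 1) * (pf + 1)) • S.brkt E pg g (S.brkt E ph h f)
      + sgn ((ph + 1) * (pg + 1)) • S.brkt E ph h (S.brkt E pf f g) = 0

/-- The closedness relation `Σ_{cycl. A,B,C} (-1)^{ε_A ε_C} (∂_A E_{BC}) = 0`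
for the two-form with components `Einv`. -/
def ClosedId (Einv : ι → ι → A) : Prop :=
  ∀ a b c : ι,
    sgn (S.ε a * S.ε c) • S.D a (Einv b c)
    + sgn (S.ε b * S.ε a) • S.D b (Einv c a)
    + sgn (S.ε c * S.ε b) • S.D c (Einv a b) = 0

/-- The Jacobi identity `Σ_{cycl. A,B,C} (-1)^{(ε_A+1)(ε_C+1)} E^{AD} (∂_D E^{BC}) = 0`
in terms of the matrix `E^{AB}`. -/
def EJacobiId (E : ι → ι → A) : Prop :=
  ∀ a b c : ι,
    ∑ d, (sgn ((S.ε a + 1) * (S.ε c + 1)) • (E a d * S.D d (E b c))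
      + sgn ((S.ε b + 1) * (S.ε a + 1)) • (E b d * S.D d (E c a))
      + sgn ((S.ε c + 1) * (S.ε b + 1)) • (E c d * S.D d (E a b))) = 0

/-- `E` is a non-degenerate graded-skewsymmetric (2,0)-tensor with inverse `Einv`. -/
structure AntiSymp (E Einv : ι → ι → A) : Prop where
  E_mem : ∀ a b, E a b ∈ S.hom (S.ε a + S.ε b + 1)
  E_skew : ∀ a b, E a b = - sgn ((S.ε a + 1) * (S.ε b + 1)) • E b a
  Einv_mem : ∀ a b, Einv a b ∈ S.hom (S.ε a + S.ε b + 1)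
  Einv_skew : ∀ a b, Einv a b = - sgn (S.ε a * S.ε b) • Einv b a
  mul_inv : ∀ a c, ∑ b, E a b * Einv b c = if a = c then (1 : A) else 0
  inv_mul : ∀ a c, ∑ b, Einv a b * E b c = if a = c then (1 : A) else 0

/-- An operator `T` of parity `pT` is of at most first order iff all its double graded
commutators with left multiplication operators vanish. -/
def IsFirstOrder (pT : ZMod 2) (T : A →ₗ[ℚ] A) : Prop :=
  ∀ (pf pg : ZMod 2) (f g : A), f ∈ S.hom pf → g ∈ S.hom pg →
    gcomm (pT + pf) pg (gcomm pT pf T (L f)) (L g) = 0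

/-- The third-order terms of an operator `T` of parity `pT` vanish iff all its triple
graded commutators with left multiplication operators vanish. -/
def ThirdOrderVanish (pT : ZMod 2) (T : A →ₗ[ℚ] A) : Prop :=
  ∀ (pf pg ph : ZMod 2) (f g h : A),
    f ∈ S.hom pf → g ∈ S.hom pg → h ∈ S.hom ph →
      gcomm (pT + pf + pg) ph
        (gcomm (pT + pf) pg (gcomm pT pf T (L f)) (L g)) (L h) = 0

/-- `ν_F^{(0)} = ((-1)^{ε_A}/4)(∂_A + F_A/2)(E^{AB} F_B)`. -/
def nuF0 (E : ι → ι → A) (F : ι → A) : A :=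
  (1/4 : ℚ) • ∑ a, ∑ b, sgn (S.ε a) •
    (S.D a (E a b * F b) + (1/2 : ℚ) • (F a * (E a b * F b)))

/-- `ν^{(1)} = (-1)^{ε_A} (∂_B ∂_A E^{AB})`. -/
def nu1 (E : ι → ι → A) : A :=
  ∑ a, ∑ b, sgn (S.ε a) • S.D b (S.D a (E a b))

/-- `ν^{(2)} = (-1)^{ε_A ε_C} (∂_D E^{AB}) E_{BC} (∂_A E^{CD})`. -/
def nu2 (E Einv : ι → ι → A) : A :=
  ∑ a, ∑ b, ∑ c, ∑ d, sgn (S.ε a * S.ε c) •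
    (S.D d (E a b) * (Einv b c * S.D a (E c d)))

/-- `ν_F = ν_F^{(0)} + ν^{(1)}/8 - ν^{(2)}/24`. -/
def nuF (E Einv : ι → ι → A) (F : ι → A) : A :=
  S.nuF0 E F + (1/8 : ℚ) • S.nu1 E - (1/24 : ℚ) • S.nu2 E Einv

/-- The divergence `div_1 X = (-1)^{ε_A} (∂_A X^A)`. -/
def div1 (X : ι → A) : A := ∑ a, sgn (S.ε a) • S.D a (X a)

/-- A form variation (infinitesimal coordinate transformation `δΓ^A = X^A`, compared
at the same argument): an even derivation commuting with the partial derivatives. -/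
structure FormVar (X : ι → A) (δv : A →ₗ[ℚ] A) : Prop where
  deriv : ∀ a b : A, δv (a * b) = δv a * b + a * δv b
  commD : ∀ (i : ι) (a : A), δv (S.D i a) = S.D i (δv a)
  X_mem : ∀ i, X i ∈ S.hom (S.ε i)

/-- The form variation of a (2,0)-tensor `E^{AB}` under `δΓ^A = X^A`:
`δE^{AB} = (X^A ∂⃖_C) E^{CB} + E^{AC}(∂_C X^B) - X^C (∂_C E^{AB})`. -/
def VarE (X : ι → A) (δv : A →ₗ[ℚ] A) (E : ι → ι → A) : Prop :=
  ∀ a b, δv (E a b) =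
    (∑ c, sgn (S.ε c * (S.ε a + 1)) • (S.D c (X a) * E c b))
    + (∑ c, E a c * S.D c (X b))
    - ∑ c, X c * S.D c (E a b)

/-- The form variation of a line bundle connection `F_A` under `δΓ^A = X^A`:
`δF_A = -(∂_A X^B) F_B - ∂_A(div_1 X) - X^C (∂_C F_A)`. -/
def VarF (X : ι → A) (δv : A →ₗ[ℚ] A) (F : ι → A) : Prop :=
  ∀ a, δv (F a) =
    - (∑ b, S.D a (X b) * F b) - S.D a (S.div1 X) - ∑ c, X c * S.D c (F a)

/-- Khudaverdian–Voronov's odd quantity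
`ν(F¹;F²,E) = ((-1)^{ε_A}/4)(∂_A + (F¹_A+F²_A)/2)(E^{AB}(F¹_B - F²_B))`. -/
def nu12 (E : ι → ι → A) (F1 F2 : ι → A) : A :=
  (1/4 : ℚ) • ∑ a, ∑ b, sgn (S.ε a) •
    (S.D a (E a b * (F1 b - F2 b))
      + (1/2 : ℚ) • ((F1 a + F2 a) * (E a b * (F1 b - F2 b))))

/-- The odd Laplacian `Δ_ρ = ((-1)^{ε_A}/(2ρ)) ∂_A ρ E^{AB} ∂_B` for a density `ρ`
with inverse `ρinv`. -/
def lapRho (E : ι → ι → A) (ρ ρinv : A) : A →ₗ[ℚ] A :=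
  (1/2 : ℚ) • ∑ a, ∑ b, sgn (S.ε a) •
    (L ρinv ∘ₗ S.D a ∘ₗ L ρ ∘ₗ L (E a b) ∘ₗ S.D b)

/-- `ν_ρ^{(0)} = (Δ_1 √ρ)/√ρ`, where `sq = √ρ` and `sqinv = 1/√ρ`. -/
def nuRho0 (E : ι → ι → A) (sq sqinv : A) : A :=
  sqinv * (S.lap (fun _ => (0 : A)) E sq)

/-- `ν_ρ = ν_ρ^{(0)} + ν^{(1)}/8 - ν^{(2)}/24`. -/
def nuRho (E Einv : ι → ι → A) (sq sqinv : A) : A :=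
  S.nuRho0 E sq sqinv + (1/8 : ℚ) • S.nu1 E - (1/24 : ℚ) • S.nu2 E Einv

/-- Khudaverdian's operator `Δ_E = Δ_1 + ν^{(1)}/8 - ν^{(2)}/24`. -/
def lapE (E Einv : ι → ι → A) : A →ₗ[ℚ] A :=
  S.lap (fun _ => (0 : A)) E + L ((1/8 : ℚ) • S.nu1 E - (1/24 : ℚ) • S.nu2 E Einv)

/-- The reordered Christoffel symbols `Γ^A{}_{BC} = (-1)^{ε_A ε_B} Γ_B{}^A{}_C`. -/
def Gup (Gm : ι → ι → ι → A) (a b c : ι) : A := sgn (S.ε a * S.ε b) • Gm b a c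

/-- The reordered Riemann curvature tensor
`R^A{}_{BCD} = (-1)^{ε_A ε_B}(∂_B Γ^A{}_{CD}) + Γ^A{}_{BE} Γ^E{}_{CD} - (-1)^{ε_B ε_C}(B ↔ C)`,
expressed through the reordered Christoffel symbols `Gu = Γ^·{}_{··}`. -/
def riemRe (Gu : ι → ι → ι → A) (a b c d : ι) : A :=
  sgn (S.ε a * S.ε b) • S.D b (Gu a c d) + (∑ e, Gu a b e * Gu e c d)
  - sgn (S.ε b * S.ε c) •
      (sgn (S.ε a * S.ε c) • S.D c (Gu a b d) + ∑ e, Gu a c e * Gu e b d)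

/-- The Ricci tensor `R_{AB} = R^C{}_{CAB}`. -/
def ricci (Gu : ι → ι → ι → A) (a b : ι) : A := ∑ c, S.riemRe Gu c c a b

/-- The odd scalar curvature `R = R_{AB} E^{BA}`. -/
def scalarR (Gu : ι → ι → ι → A) (E : ι → ι → A) : A :=
  ∑ a, ∑ b, S.ricci Gu a b * E b a

/-- The Riemann curvature tensor
`R_{AB}{}^C{}_D = (∂_A Γ_B{}^C{}_D) + (-1)^{ε_B ε_C} Γ_A{}^C{}_E Γ^E{}_{BD} - (-1)^{ε_A ε_B}(A ↔ B)`,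
built from the Christoffel symbols `Gm = Γ_·{}^·{}_·`. -/
def riem (Gm : ι → ι → ι → A) (a b c d : ι) : A :=
  S.D a (Gm b c d) + sgn (S.ε b * S.ε c) • (∑ e, Gm a c e * S.Gup Gm e b d)
  - sgn (S.ε a * S.ε b) •
      (S.D b (Gm a c d) + sgn (S.ε a * S.ε c) • ∑ e, Gm b c e * S.Gup Gm e a d)

/-- The Christoffel symbols with three lower indices,
`Γ_{ABC} = E_{AD} Γ^D{}_{BC} (-1)^{ε_B}`, built from `Gu = Γ^·{}_{··}`. -/
def Glow (Einv : ι → ι → A) (Gu : ι → ι → ι → A) (a b c : ι) : A :=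
  sgn (S.ε b) • ∑ d, Einv a d * Gu d b c

/-- `γ_{ABC} = Γ_{ABC} - (1/3)(E_{AB} ∂⃖_C + E_{AC} ∂⃖_B (-1)^{ε_B ε_C})`. -/
def gam (Einv : ι → ι → A) (Gu : ι → ι → ι → A) (a b c : ι) : A :=
  S.Glow Einv Gu a b c
  - (1/3 : ℚ) • (sgn (S.ε c * (S.ε a + S.ε b)) • S.D c (Einv a b)
      + sgn (S.ε b * S.ε c) • (sgn (S.ε b * (S.ε a + S.ε c)) • S.D b (Einv a c)))

end SuperAlg

namespace SuperAlg

lemma sgn_add (p q : ZMod 2) : sgn (p + q) = sgn p * sgn q := by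
  have h : ∀ p : ZMod 2, p = 0 ∨ p = 1 := by decide
  have h11 : (1 : ZMod 2) + 1 = 0 := by decide
  rcases h p with rfl | rfl <;> rcases h q with rfl | rfl <;> simp [sgn, h11]

lemma neg_sgn (p : ZMod 2) : -sgn p = sgn (p + 1) := by
  rw [sgn_add]; simp [sgn]

lemma sgn_zero : sgn 0 = 1 := by simp [sgn]

section
variable {ι : Type} [Fintype ι] [DecidableEq ι] {A : Type} [Ring A] [Algebra ℚ A]
variable (S : SuperAlg ι A)

/-- The covariant derivative `∇_a = ∂_a + F_a`. -/
def nab (F : ι → A) (a : ι) : A →ₗ[ℚ] A := S.D a + L (F a)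

/-- The Hamiltonian vector field `B_a = (x^a, ·) = E^{ab} ∂_b` of a coordinate. -/
def BB (E : ι → ι → A) (a : ι) : A →ₗ[ℚ] A := ∑ b, L (E a b) ∘ₗ S.D b

lemma nab_apply (F : ι → A) (a : ι) (g : A) : S.nab F a g = S.D a g + F a * g := rfl

lemma BB_apply (E : ι → ι → A) (a : ι) (g : A) : S.BB E a g = ∑ b, E a b * S.D b g := by
  simp [BB, L]

lemma lap_apply (F : ι → A) (E : ι → ι → A) (g : A) :
    S.lap F E g = (1/2 : ℚ) • ∑ a, sgn (S.ε a) • S.nab F a (S.BB E a g) := by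
  simp only [lap, BB_apply, LinearMap.smul_apply, LinearMap.sum_apply, LinearMap.add_apply,
    LinearMap.comp_apply, map_sum, Finset.smul_sum, nab_apply, L, LinearMap.mulLeft_apply]

lemma Hop_apply (E : ι → ι → A) (x g : A) :
    S.Hop E x g = ∑ a, ∑ b, S.D a x * (E a b * S.D b g) := by
  simp [Hop, L]

lemma BB_coord (E : ι → ι → A) (a b : ι) : S.BB E a (S.coord b) = E a b := by
  simp [BB_apply, S.D_coord]

lemma brkt_coord (E : ι → ι → A) (a : ι) (g : A) :
    S.brkt E (S.ε a) (S.coord a) g = S.BB E a g := by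
  have h : ∀ p : ZMod 2, p * (p + 1) = 0 := by decide
  simp only [brkt, BB_apply, S.D_coord]
  rw [Finset.sum_eq_single a]
  · simp [h, sgn_zero]
  · intro b _ hb; simp [hb]
  · simp

lemma BB_mem {E Einv : ι → ι → A} (hE : S.AntiSymp E Einv) (a : ι) {p : ZMod 2} {g : A}
    (hg : g ∈ S.hom p) : S.BB E a g ∈ S.hom (S.ε a + p + 1) := by
  rw [BB_apply]
  refine Submodule.sum_mem _ fun b _ => ?_
  have := S.mul_mem (hE.E_mem a b) (S.D_mem b hg)
  have h : ∀ a b p : ZMod 2, a + b + 1 + (p + b) = a + p + 1 := by decide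
  rwa [h] at this

lemma nab_mem {F : ι → A} (hF : ∀ a, F a ∈ S.hom (S.ε a)) (a : ι) {p : ZMod 2} {g : A}
    (hg : g ∈ S.hom p) : S.nab F a g ∈ S.hom (p + S.ε a) := by
  rw [nab_apply]
  refine Submodule.add_mem _ (S.D_mem a hg) ?_
  rw [add_comm]; exact S.mul_mem (hF a) hg

lemma lap_mem {E Einv : ι → ι → A} (hE : S.AntiSymp E Einv) {F : ι → A}
    (hF : ∀ a, F a ∈ S.hom (S.ε a)) {p : ZMod 2} {g : A}
    (hg : g ∈ S.hom p) : S.lap F E g ∈ S.hom (p + 1) := by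
  rw [lap_apply]
  refine Submodule.smul_mem _ _ (Submodule.sum_mem _ fun a _ => Submodule.smul_mem _ _ ?_)
  have := S.nab_mem hF a (S.BB_mem hE a hg)
  have h : ∀ a p : ZMod 2, a + p + 1 + a = p + 1 := by decide
  rwa [h] at this

lemma nab_mul (F : ι → A) (a : ι) {p : ZMod 2} {f : A}
    (hf : f ∈ S.hom p) (g : A) :
    S.nab F a (f * g) = S.nab F a f * g + sgn (S.ε a * p) • (f * S.D a g) := by
  rw [nab_apply, nab_apply, S.D_leibniz a g hf]; noncomm_ring

lemma nab_mul' {F : ι → A} (hF : ∀ a, F a ∈ S.hom (S.ε a)) (a : ι) {p : ZMod 2} {f : A}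
    (hf : f ∈ S.hom p) (g : A) :
    S.nab F a (f * g) = S.D a f * g + sgn (S.ε a * p) • (f * S.nab F a g) := by
  rw [nab_apply, nab_apply, S.D_leibniz a g hf, mul_add, smul_add, ← mul_assoc,
    S.supercomm (hF a) hf, smul_mul_assoc, mul_assoc, add_assoc]

/-- Flatness of `F`: the covariant derivatives supercommute. -/
lemma nab_comm {F : ι → A} (hF : ∀ a, F a ∈ S.hom (S.ε a))
    (hflat : ∀ a b, S.curv F a b = 0) (a b : ι) (g : A) :
    S.nab F a (S.nab F b g) = sgn (S.ε a * S.ε b) • S.nab F b (S.nab F a g) := by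
  have h2 : ∀ p : ZMod 2, p + p = 0 := by decide
  have hc : S.D a (F b) = sgn (S.ε a * S.ε b) • S.D b (F a) := sub_eq_zero.mp (hflat a b)
  have hs : sgn (S.ε a * S.ε b) * sgn (S.ε a * S.ε b) = 1 := by
    rw [← sgn_add, h2, sgn_zero]
  simp only [nab_apply, map_add, S.D_leibniz a g (hF b), S.D_leibniz b g (hF a),
    smul_add, hc, S.D_comm a b g, ← mul_assoc, S.supercomm (hF a) (hF b), smul_mul_assoc,
    mul_comm (S.ε b) (S.ε a), smul_smul, hs, one_smul]
  abel

lemma BB_coord_mul {E Einv : ι → ι → A} (hE : S.AntiSymp E Einv) (a c : ι) (g : A) :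
    S.BB E c (S.coord a * g)
      = E c a * g + sgn (S.ε a * (S.ε c + 1)) • (S.coord a * S.BB E c g) := by
  have h : ∀ a b c : ZMod 2, b * a + (c + b + 1) * a = a * (c + 1) := by decide
  simp only [BB_apply, S.D_leibniz _ g (S.coord_mem a), S.D_coord, mul_add (E _ _),
    Finset.sum_add_distrib, Finset.mul_sum, Finset.smul_sum]
  congr 1
  · simp
  · refine Finset.sum_congr rfl fun b _ => ?_
    rw [mul_smul_comm, ← mul_assoc, S.supercomm (hE.E_mem c b) (S.coord_mem a),
      smul_mul_assoc, smul_smul, ← sgn_add, h, mul_assoc]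

/-- `Δ` generates the antibracket with the coordinate `x^a`. -/
lemma lap_coord_mul {E Einv : ι → ι → A} (hE : S.AntiSymp E Einv) {F : ι → A}
    (hF : ∀ a, F a ∈ S.hom (S.ε a)) (a : ι) (g : A) :
    S.lap F E (S.coord a * g) = S.lap F E (S.coord a) * g + sgn (S.ε a) • S.BB E a g
      + sgn (S.ε a) • (S.coord a * S.lap F E g) := by
  have h1 : ∑ c, sgn (S.ε c) • S.nab F c (E c a * g)
      = (∑ c, sgn (S.ε c) • S.nab F c (E c a)) * g + sgn (S.ε a) • S.BB E a g := by
    have h : ∀ a c : ZMod 2, c + c * (c + a + 1) + ((c + 1) * (a + 1) + 1) = a := by decide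
    rw [Finset.sum_mul, BB_apply, Finset.smul_sum, ← Finset.sum_add_distrib]
    refine Finset.sum_congr rfl fun c _ => ?_
    rw [S.nab_mul F c (hE.E_mem c a), smul_add, smul_mul_assoc, hE.E_skew c a, neg_sgn,
      smul_mul_assoc, smul_smul, smul_smul, ← sgn_add, ← sgn_add, h]
  have h2 : ∑ c, sgn (S.ε c) • S.nab F c
        (sgn (S.ε a * (S.ε c + 1)) • (S.coord a * S.BB E c g))
      = sgn (S.ε a) • S.BB E a g
        + sgn (S.ε a) • (S.coord a * ∑ c, sgn (S.ε c) • S.nab F c (S.BB E c g)) := by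
    have h : ∀ a c : ZMod 2, c + (a * (c + 1) + c * a) = a + c := by decide
    have h' : ∀ a : ZMod 2, a + a * (a + 1) = a := by decide
    have e : ∀ c, sgn (S.ε c) • S.nab F c
        (sgn (S.ε a * (S.ε c + 1)) • (S.coord a * S.BB E c g))
        = (if c = a then sgn (S.ε a) • S.BB E a g else 0)
          + sgn (S.ε a) • (S.coord a * (sgn (S.ε c) • S.nab F c (S.BB E c g))) := by
      intro c
      rw [map_smul, S.nab_mul' hF c (S.coord_mem a), S.D_coord]
      simp only [smul_add, mul_smul_comm, smul_smul, ← sgn_add, h]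
      congr 1
      split_ifs with hca
      · subst hca; rw [h', one_mul]
      · simp
    rw [Finset.sum_congr rfl fun c _ => e c, Finset.sum_add_distrib, Finset.mul_sum,
      Finset.smul_sum]
    simp
  have hv : S.lap F E (S.coord a) = (1/2 : ℚ) • ∑ c, sgn (S.ε c) • S.nab F c (E c a) := by
    simp only [lap_apply, BB_coord]
  rw [hv, S.lap_apply F E (S.coord a * g), S.lap_apply F E g]
  simp only [S.BB_coord_mul hE, map_add, smul_add, Finset.sum_add_distrib]
  rw [h1, h2]
  simp only [smul_add, smul_mul_assoc, mul_smul_comm, smul_smul]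
  module

lemma Hop_coord_mul {E Einv : ι → ι → A} (hE : S.AntiSymp E Einv) {ν : A}
    (hν : ν ∈ S.hom 1) (a : ι) (g : A) :
    S.Hop E ν (S.coord a * g) = S.Hop E ν (S.coord a) * g + S.coord a * S.Hop E ν g := by
  simp only [Hop_apply, Finset.sum_mul, Finset.mul_sum, ← Finset.sum_add_distrib]
  refine Finset.sum_congr rfl fun c _ => Finset.sum_congr rfl fun b _ => ?_
  have h : ∀ a b c : ZMod 2, b * a + (1 + c + (c + b + 1)) * a = 0 := by decide
  rw [S.D_leibniz b g (S.coord_mem a), mul_add, mul_add, mul_smul_comm, mul_smul_comm]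
  congr 1
  · noncomm_ring
  · rw [← mul_assoc, ← mul_assoc,
      ← mul_assoc (S.D c ν), S.supercomm (S.mul_mem (S.D_mem c hν) (hE.E_mem c b))
        (S.coord_mem a), smul_mul_assoc, smul_smul, ← sgn_add, h, sgn_zero, one_smul]
    simp only [mul_assoc]

/-- `Δ` is a derivation of the bracket `(x^a, x^b)`, because `Δ²` is a derivation
of the product `x^a x^b`. -/
lemma lap_E {E Einv : ι → ι → A} (hE : S.AntiSymp E Einv) {F : ι → A}
    (hF : ∀ a, F a ∈ S.hom (S.ε a)) {ν : A} (hν : ν ∈ S.hom 1)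
    (hsq : ∀ g, S.lap F E (S.lap F E g) = S.Hop E ν g) (a b : ι) :
    S.BB E a (S.lap F E (S.coord b))
      + sgn (S.ε a * S.ε b) • S.BB E b (S.lap F E (S.coord a))
      = - (sgn (S.ε a) • S.lap F E (E a b)) := by
  have hva := S.lap_mem hE hF (S.coord_mem a)
  have hvb := S.lap_mem hE hF (S.coord_mem b)
  have H := hsq (S.coord a * S.coord b)
  rw [S.Hop_coord_mul hE hν, ← hsq, ← hsq, S.lap_coord_mul hE hF, map_add, map_add, map_smul,
    map_smul, S.lap_coord_mul hE hF, S.BB_coord,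
    S.supercomm hva (S.coord_mem b), map_smul, S.lap_coord_mul hE hF,
    S.supercomm (S.lap_mem hE hF hva) (S.coord_mem b), S.supercomm hvb hva] at H
  have h1 : sgn ((S.ε a + 1) * S.ε b) = sgn (S.ε a * S.ε b) * sgn (S.ε b) := by
    rw [← sgn_add]; congr 1; ring
  have h2 : sgn ((S.ε b + 1) * (S.ε a + 1))
      = - (sgn (S.ε a * S.ε b) * sgn (S.ε b) * sgn (S.ε a)) := by
    rw [← sgn_add, ← sgn_add, neg_sgn]; congr 1; ring
  have h3 : sgn ((S.ε a + 1 + 1) * S.ε b) = sgn (S.ε a * S.ε b) := by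
    have : ∀ a b : ZMod 2, (a + 1 + 1) * b = a * b := by decide
    rw [this]
  have hsq1 : ∀ p, sgn p * sgn p = 1 := by
    intro p; have h2 : ∀ p : ZMod 2, p + p = 0 := by decide
    rw [← sgn_add, h2, sgn_zero]
  have ea := hsq1 (S.ε a)
  have eb := hsq1 (S.ε b)
  have eab := hsq1 (S.ε a * S.ε b)
  rw [h1, h2, h3] at H
  generalize sgn (S.ε a) = sa at *
  generalize sgn (S.ε b) = sb at *
  generalize sgn (S.ε a * S.ε b) = sab at *
  rw [← sub_eq_zero] at H ⊢
  rw [← H]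
  have k1 : sab * sb * -(sab * sb * sa) = -sa := by
    linear_combination (-sa * sab^2) * eb - sa * eab
  have k2 : sab * sb * sb = sab := by linear_combination sab * eb
  simp only [smul_add, smul_smul, k1, k2, ea, one_smul]
  module

/-- The third-order term vanishes by the Jacobi identity on coordinates. -/
lemma triple_zero {E : ι → ι → A} {F : ι → A} (hF : ∀ a, F a ∈ S.hom (S.ε a))
    (hflat : ∀ a b, S.curv F a b = 0) (hJac : S.JacobiId E) :
    ∑ b, ∑ a, ∑ c, sgn (S.ε b + S.ε c) •
      S.nab F b (S.nab F a (S.nab F c (S.BB E c (E a b)))) = 0 := by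
  set T : ι → ι → ι → A := fun b a c => sgn (S.ε b + S.ε c) •
      S.nab F b (S.nab F a (S.nab F c (S.BB E c (E a b)))) with hT
  have r1 : ∑ b, ∑ a, ∑ c, T b a c = ∑ b, ∑ a, ∑ c, T c b a := by
    rw [Finset.sum_comm]
    conv_rhs => rw [Finset.sum_congr rfl fun b _ => Finset.sum_comm]
  have r2 : ∑ b, ∑ a, ∑ c, T b a c = ∑ b, ∑ a, ∑ c, T a c b := by
    conv_rhs => rw [Finset.sum_comm]
    refine Finset.sum_congr rfl fun b _ => ?_
    rw [Finset.sum_comm]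
  have key : ∀ b a c, T b a c + T c b a + T a c b = 0 := by
    intro b a c
    have J := hJac _ _ _ _ _ _ (S.coord_mem c) (S.coord_mem a) (S.coord_mem b)
    simp only [brkt_coord, BB_coord] at J
    have J' := congrArg (fun x => sgn (S.ε c * S.ε b + 1) •
      S.nab F b (S.nab F a (S.nab F c x))) J
    simp only [map_add, map_smul, map_zero, smul_add, smul_zero, smul_smul, ← sgn_add] at J'
    rw [← J']
    simp only [hT]
    -- the other two words are brought to the order `∇_b ∇_a ∇_c`
    have e1 : ∀ x, S.nab F c (S.nab F b (S.nab F a x)) = sgn (S.ε c * S.ε b + S.ε c * S.ε a) •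
        S.nab F b (S.nab F a (S.nab F c x)) := by
      intro x
      rw [S.nab_comm hF hflat c b, S.nab_comm hF hflat c a, map_smul, smul_smul, sgn_add]
    have e2 : ∀ x, S.nab F a (S.nab F c (S.nab F b x)) = sgn (S.ε c * S.ε b + S.ε a * S.ε b) •
        S.nab F b (S.nab F a (S.nab F c x)) := by
      intro x
      rw [S.nab_comm hF hflat c b, map_smul, S.nab_comm hF hflat a b, smul_smul, sgn_add]
    have k1 : ∀ b c : ZMod 2, b + c = c * b + 1 + (c + 1) * (b + 1) := by decide
    have k2 : ∀ a b c : ZMod 2,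
      c + a + (c * b + c * a) = c * b + 1 + (a + 1) * (c + 1) := by decide
    have k3 : ∀ a b c : ZMod 2,
      a + b + (c * b + a * b) = c * b + 1 + (b + 1) * (a + 1) := by decide
    rw [e1, e2, smul_smul, smul_smul, ← sgn_add, ← sgn_add, k1 (S.ε b), k2, k3]
  have h3 : (3 : ℚ) • ∑ b, ∑ a, ∑ c, T b a c = 0 := by
    have : (3 : ℚ) • ∑ b, ∑ a, ∑ c, T b a c = ∑ b, ∑ a, ∑ c, T b a c
        + ∑ b, ∑ a, ∑ c, T c b a + ∑ b, ∑ a, ∑ c, T a c b := by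
      rw [← r1, ← r2]; module
    rw [this]
    simp only [← Finset.sum_add_distrib, key, Finset.sum_const_zero]
  exact (smul_eq_zero.mp h3).resolve_left (by norm_num)

/-- `Δ² x^b = (ν, x^b) = -(x^b, ν)`. -/
lemma lap_vv {E Einv : ι → ι → A} (hE : S.AntiSymp E Einv) {F : ι → A} {ν : A}
    (hν : ν ∈ S.hom 1) (hsq : ∀ g, S.lap F E (S.lap F E g) = S.Hop E ν g) (b : ι) :
    S.lap F E (S.lap F E (S.coord b)) = - S.BB E b ν := by
  have h : ∀ a b : ZMod 2, (1 + a) * (a + b + 1) + ((a + 1) * (b + 1) + 1) = 0 + 1 := by decide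
  rw [hsq, Hop_apply, BB_apply, ← Finset.sum_neg_distrib]
  refine Finset.sum_congr rfl fun a _ => ?_
  simp only [S.D_coord, mul_ite, mul_one, mul_zero, Finset.sum_ite_eq', Finset.mem_univ, if_true]
  rw [S.supercomm (S.D_mem a hν) (hE.E_mem a b), hE.E_skew a b, neg_sgn, smul_mul_assoc,
    smul_smul, ← sgn_add, h, ← neg_sgn, sgn_zero, neg_one_smul]

end

/-- For a flat line bundle connection `F`, granted the Jacobi identity
and the first-order condition `Δ_F² = (ν,·)`, the zeroth-order nilpotency condition
`(Δ_F ν) = 0` follows automatically. -/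
theorem zeroth_order_condition_automatic
    {ι : Type} [Fintype ι] [DecidableEq ι] {A : Type} [Ring A] [Algebra ℚ A]
    (S : SuperAlg ι A) (E Einv : ι → ι → A) (F : ι → A) (ν : A)
    (hE : S.AntiSymp E Einv) (hF : ∀ a, F a ∈ S.hom (S.ε a))
    (hJac : S.JacobiId E)
    (hflat : ∀ a b, S.curv F a b = 0)
    (hν : ν ∈ S.hom 1)
    (hsq : (S.lap F E) ∘ₗ (S.lap F E) = S.Hop E ν) :
    S.lap F E ν = 0 := by
  have hsq' : ∀ g, S.lap F E (S.lap F E g) = S.Hop E ν g := fun g => LinearMap.congr_fun hsq g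
  set v : ι → A := fun b => S.lap F E (S.coord b) with hv
  -- the divergence of the vector field `Δ²`
  set Z : A := ∑ b, sgn (S.ε b) • S.nab F b (S.lap F E (v b)) with hZ
  have hZν : Z = (-2 : ℚ) • S.lap F E ν := by
    rw [hZ, S.lap_apply F E ν, smul_smul, show (-2 : ℚ) * (1/2) = -1 by norm_num, neg_one_smul,
      ← Finset.sum_neg_distrib]
    refine Finset.sum_congr rfl fun b _ => ?_
    rw [hv, S.lap_vv hE hν hsq', map_neg, smul_neg]
  have hZ2 : (2 : ℚ) • Z = ∑ b, ∑ a, sgn (S.ε b + S.ε a) •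
      S.nab F b (S.nab F a (S.BB E a (v b))) := by
    rw [hZ, Finset.smul_sum]
    refine Finset.sum_congr rfl fun b _ => ?_
    rw [S.lap_apply F E (v b), map_smul, map_sum, smul_smul, smul_smul,
      show (2 : ℚ) * sgn (S.ε b) * (1/2) = sgn (S.ε b) by ring, Finset.smul_sum]
    refine Finset.sum_congr rfl fun a _ => ?_
    rw [map_smul, smul_smul, sgn_add]
  have hZ2' : (2 : ℚ) • Z = ∑ b, ∑ a, sgn (S.ε b + S.ε a) •
      S.nab F b (S.nab F a (sgn (S.ε a * S.ε b) • S.BB E b (v a))) := by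
    rw [hZ2, Finset.sum_comm]
    refine Finset.sum_congr rfl fun b _ => Finset.sum_congr rfl fun a _ => ?_
    rw [S.nab_comm hF hflat a b, map_smul, map_smul, add_comm]
  have h8 : (-8 : ℚ) • Z = 0 := by
    rw [← S.triple_zero hF hflat hJac,
      show (-8 : ℚ) • Z = (-2 : ℚ) • ((2 : ℚ) • Z + (2 : ℚ) • Z) by module]
    nth_rewrite 2 [hZ2']
    rw [hZ2, ← Finset.sum_add_distrib, Finset.smul_sum]
    refine Finset.sum_congr rfl fun b _ => ?_
    rw [← Finset.sum_add_distrib, Finset.smul_sum]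
    refine Finset.sum_congr rfl fun a _ => ?_
    rw [← smul_add, ← map_add, ← map_add, hv, S.lap_E hE hF hν hsq' a b, S.lap_apply]
    have h : ∀ a b : ZMod 2, b + a + a = b := by decide
    simp only [map_neg, map_smul, map_sum, smul_neg, Finset.smul_sum, smul_smul,
      ← Finset.sum_neg_distrib]
    refine Finset.sum_congr rfl fun c _ => ?_
    rw [← neg_smul, sgn_add (S.ε b) (S.ε c)]
    congr 1
    have hb : sgn (S.ε b) = sgn (S.ε b + S.ε a) * sgn (S.ε a) := by rw [← sgn_add, h]
    rw [hb]; ring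
  have hZ0 : Z = 0 := (smul_eq_zero.mp h8).resolve_left (by norm_num)
  rw [hZ0] at hZν
  exact (smul_eq_zero.mp hZν.symm).resolve_left (by norm_num)

end SuperAlg
end
end

section
/- (Lemma 3 of the paper) The square of the F-less odd Laplacian Δ_1 = ((-1)^{ε_A}/2)∂_A E^{AB}∂_B, applied to the coordinate functions, satisfies 8(Δ_1² Γ^A) = (ν^{(1)}, Γ^A) - (-1)^{ε_C}(∂_B E^{CD})(∂_D ∂_C E^{BA}), where ν^{(1)} = (-1)^{ε_A}(∂_B ∂_A E^{AB}). -/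
/-!
Write `∂ₐ` for `D a` and `V^c = ∑ₐ (-1)^{εₐ} ∂ₐ E^{ac}`. Since `2 Δ₁ Γ^c = V^c`, one has
`8 Δ₁² Γ^c = 2 Y` with `Y = ∑ (-1)^{εₐ+ε_b} ∂ₐ(E^{ad} ∂_d ∂_b E^{bc})`.

The Jacobi identity on three coordinate functions says that the cyclic sum of
`± E^{ad} ∂_d E^{bc}` vanishes. Contract it with the signed second derivative `∂ₐ ∂_b`, keeping
`c` free. By skewsymmetry the first two cyclic terms contribute equally, so `2 X + T = 0`, where
`X` comes from `E^{ad} ∂_d E^{bc}` and `T` from `E^{cd} ∂_d E^{ab}`. The Leibniz rule gives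
`X = Y + Z + Q` (`jacobi_first_term`) and `T = -Q - 2 Z - (ν⁽¹⁾, Γ^c)` (`jacobi_third_term`),
where `Q` is the quadratic term of the theorem and
`Z = ∑ (-1)^{εₐ} (∂_b ∂ₐ E^{ad}) (∂_d E^{bc})`. Hence `2 Y = (ν⁽¹⁾, Γ^c) - Q`.

All signs are `sgn` of polynomials in parities, so each sign comparison reduces to an identity of
polynomial functions on `ZMod 2`, which is decided by evaluation.
-/

open scoped BigOperators

noncomputable section

namespace SuperAlg

lemma sgn_one : sgn 1 = -1 := by simp [sgn]

lemma zmod_two_cases (p : ZMod 2) : p = 0 ∨ p = 1 := by revert p; decide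

section

variable {A : Type} [Ring A] [Algebra ℚ A]

lemma sgn_smul_smul (p q : ZMod 2) (x : A) : sgn p • sgn q • x = sgn (p + q) • x := by
  rw [smul_smul, sgn_add]

lemma neg_sgn_smul (p : ZMod 2) (x : A) : -(sgn p • x) = sgn (p + 1) • x := by
  rw [sgn_add, sgn_one]; simp

end

section

variable {ι : Type} [Fintype ι] [DecidableEq ι] {A : Type} [Ring A] [Algebra ℚ A]
  (S : SuperAlg ι A)

/-! ### The Jacobi identity on coordinate functions -/

lemma brkt_coord_left (M : ι → ι → A) (a : ι) (g : A) :
    S.brkt M (S.ε a) (S.coord a) g = ∑ d, M a d * S.D d g := by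
  have h : S.ε a * (S.ε a + 1) = 0 := by generalize S.ε a = p; revert p; decide
  unfold brkt
  rw [Finset.sum_eq_single a]
  · simp [S.D_coord, h, sgn_zero]
  · intro b _ hb
    simp [S.D_coord, hb]
  · simp

/-- Evaluated on three coordinate functions, the Jacobi identity of the antibracket becomes the
Jacobi identity for the components `E^{AB}`. -/
lemma eJacobi_of_jacobi {E : ι → ι → A} (hJac : S.JacobiId E) : S.EJacobiId E := by
  intro a b c
  have h := hJac _ _ _ _ _ _ (S.coord_mem a) (S.coord_mem b) (S.coord_mem c)
  simp only [brkt_coord_left, S.D_coord, mul_ite, mul_one, mul_zero, Finset.sum_ite_eq',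
    Finset.mem_univ, if_true] at h
  simpa only [Finset.sum_add_distrib, ← Finset.smul_sum] using h

/-! ### Two derivatives of the Jacobi identity -/

/-- Second-order Leibniz rule for left derivatives. -/
lemma D_D_mul (a b : ι) {p : ZMod 2} {x : A} (y : A) (hx : x ∈ S.hom p) :
    S.D a (S.D b (x * y)) = S.D a (S.D b x) * y
      + sgn (S.ε a * (p + S.ε b)) • (S.D b x * S.D a y)
      + sgn (S.ε b * p) • (S.D a x * S.D b y)
      + sgn (S.ε b * p + S.ε a * p) • (x * S.D a (S.D b y)) := by
  rw [S.D_leibniz b y hx, map_add, map_smul, S.D_leibniz a _ (S.D_mem b hx),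
    S.D_leibniz a _ hx, smul_add, sgn_smul_smul]
  abel

variable {E Einv : ι → ι → A} (hE : S.AntiSymp E Einv)
include hE

/-- Skewsymmetry with the overall minus sign absorbed into the parity argument of `sgn`. -/
lemma E_skew' (a b : ι) :
    E a b = sgn ((S.ε a + 1) * (S.ε b + 1) + 1) • E b a := by
  conv_lhs => rw [hE.E_skew a b]
  rw [← neg_sgn_smul, neg_smul]

/-- The part of the differentiated Jacobi identity containing `Δ₁² Γ^c`. -/
lemma jacobi_first_term (a b d c : ι) :
    sgn (S.ε a + S.ε a * S.ε b) • S.D a (S.D b (E a d * S.D d (E b c)))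
      = sgn (S.ε a) • sgn (S.ε b) • S.D a (E a d * S.D d (S.D b (E b c)))
        + sgn (S.ε a) • (S.D b (S.D a (E a d)) * S.D d (E b c))
        + sgn (S.ε a) • (S.D b (E a d) * S.D d (S.D a (E b c))) := by
  rw [S.D_leibniz b _ (hE.E_mem a d), map_add, map_smul,
    S.D_leibniz a _ (S.D_mem b (hE.E_mem a d)), S.D_comm a b (E a d), S.D_comm b d (E b c),
    S.D_comm a d (E b c)]
  simp only [smul_add, sgn_smul_smul, mul_smul_comm, smul_mul_assoc, map_smul]
  generalize S.ε a = p, S.ε b = q, S.ε d = r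
  have e1 : p + p * q + p * q = p := by revert p q; decide
  have e2 : p + p * q + (p * (p + r + 1 + q) + p * r) = p := by revert p q r; decide
  have e3 : p + p * q + (q * (p + r + 1) + q * r) = p + q := by revert p q r; decide
  rw [e1, e2, e3]
  abel

/-- The part of the differentiated Jacobi identity containing `(ν⁽¹⁾, Γ^c)`. -/
lemma jacobi_third_term (a b d c : ι) :
    sgn (S.ε a + S.ε a * S.ε b + (S.ε a + S.ε b) * (S.ε c + 1)) •
        S.D a (S.D b (E c d * S.D d (E a b)))
      = -(sgn (S.ε a) • (S.D d (E a b) * S.D b (S.D a (E d c))))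
        - sgn (S.ε a) • (S.D d (S.D a (E a b)) * S.D b (E d c))
        - sgn (S.ε b) • (S.D d (S.D b (E b a)) * S.D a (E d c))
        - sgn (S.ε a) • (S.D d (S.D b (S.D a (E a b))) * E d c) := by
  have m := hE.E_mem c d
  have n := S.D_mem d (hE.E_mem a b)
  rw [S.D_D_mul a b _ m,
    S.supercomm (S.D_mem a (S.D_mem b m)) n,
    S.supercomm (S.D_mem b m) (S.D_mem a n),
    S.supercomm (S.D_mem a m) (S.D_mem b n),
    S.supercomm m (S.D_mem a (S.D_mem b n)),
    E_skew' S hE c d, E_skew' S hE b a, S.D_comm b d (E a b),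
    S.D_comm a d (E a b)]
  simp only [map_smul, S.D_comm a d, S.D_comm a b (E d c), S.D_comm a b (E a b),
    sgn_smul_smul, mul_smul_comm, smul_mul_assoc, smul_add, sub_eq_add_neg, neg_sgn_smul]
  generalize S.ε a = p, S.ε b = q, S.ε d = r, S.ε c = s
  have key : ∀ {u v u' v' u'' v'' u''' v''' : ZMod 2} {x y z w : A},
      u = v → u' = v' → u'' = v'' → u''' = v''' →
      sgn u • x + sgn u' • y + sgn u'' • z + sgn u''' • w
        = sgn v • x + sgn v' • y + sgn v'' • z + sgn v''' • w := by
    rintro _ _ _ _ _ _ _ _ _ _ _ _ rfl rfl rfl rfl; rfl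
  apply key <;> revert p q r s <;> decide

/-- The contraction of the Jacobi identity with the signed second derivative `∂ₐ ∂_b`. -/
lemma differentiated_jacobi (hJac : S.JacobiId E) (c : ι) :
    (2 : ℚ) • (∑ a, ∑ b, ∑ d,
        sgn (S.ε a + S.ε a * S.ε b) • S.D a (S.D b (E a d * S.D d (E b c))))
      + ∑ a, ∑ b, ∑ d, sgn (S.ε a + S.ε a * S.ε b + (S.ε a + S.ε b) * (S.ε c + 1)) •
        S.D a (S.D b (E c d * S.D d (E a b))) = 0 := by
  -- The second cyclic term, after `E c a` is turned into `E a c` and the derivatives are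
  -- exchanged, is the first one with `a` and `b` swapped.
  have key : ∀ a b, (∑ d, sgn (S.ε a + S.ε a * S.ε b) • S.D a (S.D b (E a d * S.D d (E b c))))
      + (∑ d, sgn (S.ε b + S.ε b * S.ε a) • S.D b (S.D a (E b d * S.D d (E a c))))
      + (∑ d, sgn (S.ε a + S.ε a * S.ε b + (S.ε a + S.ε b) * (S.ε c + 1)) •
        S.D a (S.D b (E c d * S.D d (E a b)))) = 0 := by
    intro a b
    have h := congrArg (fun x => sgn (S.ε a + S.ε a * S.ε b + (S.ε a + 1) * (S.ε c + 1)) •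
      S.D a (S.D b x)) (eJacobi_of_jacobi S hJac a b c)
    simp only [map_zero, smul_zero, map_sum, Finset.smul_sum] at h
    rw [← h, ← Finset.sum_add_distrib, ← Finset.sum_add_distrib]
    refine Finset.sum_congr rfl fun d _ => ?_
    rw [E_skew' S hE c a, S.D_comm b a]
    simp only [map_add, map_smul, smul_add, sgn_smul_smul, mul_smul_comm]
    generalize S.ε a = p, S.ε b = q, S.ε c = s
    have e1 : p + p * q + (p + 1) * (s + 1) + (p + 1) * (s + 1) = p + p * q := by
      revert p q s; decide
    have e2 : p + p * q + (p + 1) * (s + 1) + ((q + 1) * (p + 1) + ((s + 1) * (p + 1) + 1))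
        = q + q * p + q * p := by
      revert p q s; decide
    have e3 : p + p * q + (p + 1) * (s + 1) + (s + 1) * (q + 1)
        = p + p * q + (p + q) * (s + 1) := by
      revert p q s; decide
    rw [e1, e2, e3]
  have h2 := Finset.sum_eq_zero fun a (_ : a ∈ Finset.univ) =>
    Finset.sum_eq_zero fun b (_ : b ∈ Finset.univ) => key a b
  simp only [Finset.sum_add_distrib] at h2
  rw [two_smul, ← h2]
  congr 2
  exact Finset.sum_comm

end

/-! ### The square of the odd Laplacian on coordinates -/

/-- Lemma 3: The square of `Δ_1` on the coordinate functions satisfies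
`8(Δ_1² Γ^A) = (ν^{(1)},Γ^A) - (-1)^{ε_C}(∂_B E^{CD})(∂_D ∂_C E^{BA})`. -/
theorem lap1_squared_on_coordinates
    {ι : Type} [Fintype ι] [DecidableEq ι] {A : Type} [Ring A] [Algebra ℚ A]
    (S : SuperAlg ι A) (E Einv : ι → ι → A)
    (hE : S.AntiSymp E Einv) (hJac : S.JacobiId E) :
    ∀ a : ι,
      (8 : ℚ) • (S.lap (fun _ => (0 : A)) E) ((S.lap (fun _ => (0 : A)) E) (S.coord a))
        = S.brkt E 1 (S.nu1 E) (S.coord a)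
          - ∑ b, ∑ c, ∑ d, sgn (S.ε c) • (S.D b (E c d) * S.D d (S.D c (E b a))) := by
  intro c
  have hlap : ∀ f : A, S.lap (fun _ => (0 : A)) E f
      = (1/2 : ℚ) • ∑ a, ∑ b, sgn (S.ε a) • S.D a (E a b * S.D b f) := by
    intro f
    simp [lap, L]
  have hcoord : S.lap (fun _ => (0 : A)) E (S.coord c)
      = (1/2 : ℚ) • ∑ a, sgn (S.ε a) • S.D a (E a c) := by
    rw [hlap]
    congr 1
    refine Finset.sum_congr rfl fun a _ => ?_
    rw [Finset.sum_eq_single c]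
    · simp [S.D_coord]
    · intro b _ hb
      simp [S.D_coord, hb]
    · simp
  have hY : (8 : ℚ) • (S.lap (fun _ => (0 : A)) E) ((S.lap (fun _ => (0 : A)) E) (S.coord c))
      = (2 : ℚ) • ∑ a, ∑ b, ∑ d,
        sgn (S.ε a) • sgn (S.ε b) • S.D a (E a d * S.D d (S.D b (E b c))) := by
    rw [hcoord, hlap]
    simp only [map_smul, map_sum, Finset.mul_sum, mul_smul_comm, ← Finset.smul_sum]
    rw [smul_smul]
    simp only [Finset.smul_sum, smul_smul]
    refine Finset.sum_congr rfl fun a _ => ?_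
    rw [Finset.sum_comm]
    refine Finset.sum_congr rfl fun b _ => Finset.sum_congr rfl fun d _ => ?_
    congr 1
    ring
  have hnu : S.brkt E 1 (S.nu1 E) (S.coord c)
      = ∑ a, ∑ b, ∑ d, sgn (S.ε a) • (S.D d (S.D b (S.D a (E a b))) * E d c) := by
    have h11 : (1 + 1 : ZMod 2) = 0 := rfl
    simp only [brkt, nu1, S.D_coord, mul_ite, mul_one, mul_zero, h11, sgn_zero, one_smul,
      Finset.sum_ite_eq', Finset.mem_univ, if_true, map_sum, map_smul, Finset.sum_mul,
      smul_mul_assoc]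
    rw [Finset.sum_comm]
    exact Finset.sum_congr rfl fun a _ => Finset.sum_comm
  have hJ := differentiated_jacobi S hE hJac c
  simp only [jacobi_first_term S hE, jacobi_third_term S hE, Finset.sum_add_distrib,
    Finset.sum_sub_distrib, Finset.sum_neg_distrib] at hJ
  rw [← hnu] at hJ
  have hQ1 : ∑ a, ∑ b, ∑ d, sgn (S.ε a) • (S.D b (E a d) * S.D d (S.D a (E b c)))
      = ∑ b, ∑ a, ∑ d, sgn (S.ε a) • (S.D b (E a d) * S.D d (S.D a (E b c))) :=
    Finset.sum_comm
  have hQ2 : ∑ a, ∑ b, ∑ d, sgn (S.ε a) • (S.D d (E a b) * S.D b (S.D a (E d c)))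
      = ∑ b, ∑ a, ∑ d, sgn (S.ε a) • (S.D b (E a d) * S.D d (S.D a (E b c))) := by
    rw [← hQ1]
    exact Finset.sum_congr rfl fun a _ => Finset.sum_comm
  have hZ2 : ∑ a, ∑ b, ∑ d, sgn (S.ε a) • (S.D d (S.D a (E a b)) * S.D b (E d c))
      = ∑ a, ∑ b, ∑ d, sgn (S.ε a) • (S.D b (S.D a (E a d)) * S.D d (E b c)) :=
    Finset.sum_congr rfl fun a _ => Finset.sum_comm
  have hZ3 : ∑ a, ∑ b, ∑ d, sgn (S.ε b) • (S.D d (S.D b (E b a)) * S.D a (E d c))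
      = ∑ a, ∑ b, ∑ d, sgn (S.ε a) • (S.D b (S.D a (E a d)) * S.D d (E b c)) := by
    rw [Finset.sum_comm]
    exact hZ2
  rw [hQ1, hQ2, hZ2, hZ3] at hJ
  rw [hY]
  simp only [two_smul] at hJ ⊢
  rw [← sub_eq_zero, ← hJ]
  abel

end SuperAlg
end
end
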